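/- arXiv:1611.05785 — 2 statements merged into one kernel-verified Lean document; each statement's English description precedes it below -/
import Mathlib

section
/- Let p > q be odd primes and suppose Q is a right Bol loop of order pq containing a normal subloop of order q. Then Q is associative (hence a group). -/
/-- A right Bol loop. -/
class RightBolLoop (Q : Type*) extends Mul Q, One Q, Inv Q where
  one_mul : ∀ a : Q, 1 * a = a
  mul_one : ∀ a : Q, a * 1 = a
  mulLeft_bij : ∀ a : Q, Function.Bijective (fun x : Q => a * x)
  mulRight_bij : ∀ a : Q, Function.Bijective (fun x : Q => x * a)
  mul_inv : ∀ a : Q, a * a⁻¹ = 1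
  inv_mul : ∀ a : Q, a⁻¹ * a = 1
  rbol : ∀ w u v : Q, ((w * u) * v) * u = w * ((u * v) * u)

/-- A subloop: a subset containing the identity and closed under
multiplication and both divisions. -/
structure Subloop (Q : Type*) [RightBolLoop Q] where
  carrier : Set Q
  one_mem : (1 : Q) ∈ carrier
  mul_mem : ∀ a ∈ carrier, ∀ b ∈ carrier, a * b ∈ carrier
  ldiv_mem : ∀ a ∈ carrier, ∀ b ∈ carrier, ∀ x : Q, a * x = b → x ∈ carrier
  rdiv_mem : ∀ a ∈ carrier, ∀ b ∈ carrier, ∀ x : Q, x * a = b → x ∈ carrier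

/-- A subloop `S` is normal iff `xS = Sx`, `(xS)y = x(Sy)` and
`x(yS) = (xy)S` for all `x, y`. -/
def IsNormalSubloop {Q : Type*} [RightBolLoop Q] (S : Set Q) : Prop :=
  (∀ x : Q, (fun s => x * s) '' S = (fun s => s * x) '' S) ∧
  (∀ x y : Q, (fun s => (x * s) * y) '' S = (fun s => x * (s * y)) '' S) ∧
  (∀ x y : Q, (fun s => x * (y * s)) '' S = (fun s => (x * y) * s) '' S)

/-!
Right translations satisfy `R_u R_v R_u = R_{(uv)u}` and `R_{x^n} = R_x ^ n`, so cyclic subloops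
behave as in groups and it suffices to find an element of order `pq`. As `x ^ p` lies in the normal
subloop `S`, such an element exists unless every `x` outside `S` has order `p`. In that case fix
such an `x` and `c ∈ S`. For `1 ≤ i < p`, the element `(c * x ^ i) * c` of `x ^ i S` has order `p`,
so it is `y ^ i` for some `y ∈ xS` with `y ^ p = 1`. There are more such `i` than elements of `xS`,
so two of them share the same `y`; the equations `R_c R_x ^ i R_c = R_y ^ i` for these two exponents
force `c ^ 2 = 1`, hence `c = 1` as `pq` is odd.
-/

theorem eq_mul_of_dvd_mul_of_not_dvd {p q d : ℕ} (hp : p.Prime) (hq : q.Prime) (hd : d ∣ p * q)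
    (hdp : ¬ d ∣ p) (hdq : ¬ d ∣ q) : d = p * q := by
  obtain ⟨a, b, ha, hb, rfl⟩ := exists_dvd_and_dvd_of_dvd_mul hd
  obtain rfl | rfl := (Nat.dvd_prime hp).1 ha
  · exact absurd (by rwa [one_mul]) hdq
  obtain rfl | rfl := (Nat.dvd_prime hq).1 hb
  · exact absurd (by rw [mul_one]) hdp
  rfl

theorem exists_mul_modEq_one_of_coprime {d m : ℕ} (hd : d.Coprime m) :
    ∃ e, d * e ≡ 1 [MOD m] := by
  obtain ⟨k, hk, hk'⟩ := Nat.chineseRemainder hd 0 1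
  obtain ⟨e, rfl⟩ := Nat.modEq_zero_iff_dvd.1 hk
  exact ⟨e, hk'⟩

theorem eq_of_pow_eq_pow_of_coprime {M : Type*} [Monoid M] {x y : M} {d m : ℕ}
    (hd : d.Coprime m) (hx : x ^ m = 1) (hy : y ^ m = 1) (h : x ^ d = y ^ d) : x = y := by
  obtain ⟨e, he⟩ := exists_mul_modEq_one_of_coprime hd
  calc x = x ^ (d * e) := by rw [pow_eq_pow_of_modEq he hx, pow_one]
    _ = y ^ (d * e) := by rw [pow_mul, h, pow_mul]
    _ = y := by rw [pow_eq_pow_of_modEq he hy, pow_one]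

theorem sq_eq_one_of_mul_pow_mul_eq_pow {G : Type*} [Group G] {a x y : G} {i d m : ℕ}
    (hd : d.Coprime m) (hx : x ^ m = 1) (hy : y ^ m = 1) (hi : a * x ^ i * a = y ^ i)
    (hid : a * x ^ (i + d) * a = y ^ (i + d)) : a ^ 2 = 1 := by
  have conj_pow' (n : ℕ) : (a⁻¹ * x * a) ^ n = a⁻¹ * x ^ n * a := by
    simpa using conj_pow (a := a⁻¹) (b := x) (i := n)
  have hyd : y ^ d = (a⁻¹ * x * a) ^ d := by
    rw [pow_add, pow_add, ← hi] at hid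
    rw [conj_pow', ← mul_right_inj (a * x ^ i * a), ← hid]
    group
  have hyx : y = a⁻¹ * x * a :=
    eq_of_pow_eq_pow_of_coprime hd hy (by rw [conj_pow', hx]; group) hyd
  have ha : a = a⁻¹ := by
    rwa [hyx, conj_pow', mul_left_inj, mul_left_inj] at hi
  rw [pow_two, mul_eq_one_iff_eq_inv, ← ha]

theorem orderOf_dvd_card_of_forall_pow_fixed {X : Type*} [Finite X] (σ : Equiv.Perm X)
    (h : ∀ (n : ℕ) (a : X), (σ ^ n) a = a → σ ^ n = 1) : orderOf σ ∣ Nat.card X := by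
  have stabilizer_eq_bot (a : X) : MulAction.stabilizer (Subgroup.zpowers σ) a = ⊥ := by
    rw [Subgroup.eq_bot_iff_forall]
    rintro ⟨g, hg⟩ hga
    obtain ⟨n, rfl⟩ := mem_powers_iff_mem_zpowers.2 hg
    exact Subtype.ext (h n a hga)
  rw [← Nat.card_zpowers,
    Nat.card_congr (MulAction.selfEquivOrbitsQuotientProd stabilizer_eq_bot), Nat.card_prod]
  exact dvd_mul_left _ _

namespace RightBolLoop

variable {Q : Type*} [RightBolLoop Q]

instance : IsCancelMul Q where
  mul_left_cancel a _ _ h := (mulLeft_bij a).1 h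
  mul_right_cancel a _ _ h := (mulRight_bij a).1 h

theorem mul_mul_inv_cancel_right (w u : Q) : w * u * u⁻¹ = w := by
  rw [← mul_left_inj u, rbol, mul_inv, one_mul]

theorem mul_inv_mul_cancel_right (w u : Q) : w * u⁻¹ * u = w := by
  obtain ⟨v, rfl⟩ := (mulRight_bij u).2 w
  exact congrArg (· * u) (mul_mul_inv_cancel_right v u)

/-- The right translation `R_x : w ↦ w * x`, as a permutation of the loop. -/
def rightTranslation (x : Q) : Equiv.Perm Q where
  toFun w := w * x
  invFun w := w * x⁻¹
  left_inv w := mul_mul_inv_cancel_right w x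
  right_inv w := mul_inv_mul_cancel_right w x

theorem rightTranslation_apply (x w : Q) : rightTranslation x w = w * x := rfl

theorem rightTranslation_injective :
    Function.Injective (rightTranslation : Q → Equiv.Perm Q) := by
  intro x y h
  simpa only [rightTranslation_apply, one_mul] using DFunLike.congr_fun h 1

theorem rightTranslation_one : rightTranslation (1 : Q) = 1 := Equiv.ext mul_one

theorem rightTranslation_mul_mul (u v : Q) :
    rightTranslation (u * v * u) =
      rightTranslation u * rightTranslation v * rightTranslation u :=
  Equiv.ext fun w => (rbol w u v).symm

/-- Powers in a right Bol loop, `x ^ n = (((x * x) * x) ⋯) * x`, encoded as the image of `1` under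
the `n`-th power of the right translation by `x`. -/
instance : Pow Q ℕ := ⟨fun x n => (rightTranslation x ^ n) 1⟩

theorem pow_succ (x : Q) (n : ℕ) : x ^ (n + 1) = x ^ n * x :=
  DFunLike.congr_fun (_root_.pow_succ' (rightTranslation x) n) 1

theorem pow_zero (x : Q) : x ^ 0 = 1 := rfl

theorem pow_one (x : Q) : x ^ 1 = x := one_mul x

theorem rightTranslation_pow (x : Q) (n : ℕ) :
    rightTranslation (x ^ n) = rightTranslation x ^ n := by
  induction n using Nat.twoStepInduction with
  | zero => rw [pow_zero, rightTranslation_one, _root_.pow_zero]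
  | one => rw [pow_one, _root_.pow_one]
  | more n ih _ =>
    have hcomm : x ^ (n + 1) = x * x ^ n :=
      calc x ^ (n + 1) = (rightTranslation x ^ n) (1 * x) :=
            DFunLike.congr_fun (_root_.pow_succ (rightTranslation x) n) 1
        _ = x * x ^ n := by rw [one_mul, ← ih, rightTranslation_apply]
    rw [pow_succ, hcomm, rightTranslation_mul_mul, ih, ← _root_.pow_succ', ← _root_.pow_succ]

theorem pow_add (x : Q) (m n : ℕ) : x ^ (m + n) = x ^ m * x ^ n := by
  rw [← rightTranslation_apply, rightTranslation_pow, add_comm]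
  exact DFunLike.congr_fun (_root_.pow_add (rightTranslation x) n m) 1

theorem pow_mul (x : Q) (m n : ℕ) : x ^ (m * n) = (x ^ m) ^ n :=
  rightTranslation_injective <| by simp only [rightTranslation_pow, _root_.pow_mul]

theorem one_pow (n : ℕ) : (1 : Q) ^ n = 1 :=
  rightTranslation_injective <| by rw [rightTranslation_pow, rightTranslation_one, _root_.one_pow]

theorem rightTranslation_pow_eq_one_iff {x : Q} {n : ℕ} :
    rightTranslation x ^ n = 1 ↔ x ^ n = 1 := by
  rw [← rightTranslation_pow, ← rightTranslation_one, rightTranslation_injective.eq_iff]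

theorem pow_eq_pow_of_modEq {x : Q} {i j m : ℕ} (h : i ≡ j [MOD m]) (hx : x ^ m = 1) :
    x ^ i = x ^ j :=
  rightTranslation_injective <| by
    rw [rightTranslation_pow, rightTranslation_pow,
      _root_.pow_eq_pow_of_modEq h (rightTranslation_pow_eq_one_iff.2 hx)]

/-- The order of an element of a right Bol loop: the least `n > 0` with `x ^ n = 1`, or `0` if there
is none. -/
noncomputable def order (x : Q) : ℕ := orderOf (rightTranslation x)

theorem order_dvd_iff_pow_eq_one {x : Q} {n : ℕ} : order x ∣ n ↔ x ^ n = 1 := by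
  rw [order, orderOf_dvd_iff_pow_eq_one, rightTranslation_pow_eq_one_iff]

theorem eq_one_of_pow_eq_one_of_coprime {x : Q} {m n : ℕ} (hmn : m.Coprime n)
    (hm : x ^ m = 1) (hn : x ^ n = 1) : x = 1 := by
  rw [← pow_one x, ← order_dvd_iff_pow_eq_one, ← hmn]
  exact Nat.dvd_gcd (order_dvd_iff_pow_eq_one.2 hm) (order_dvd_iff_pow_eq_one.2 hn)

theorem order_dvd_card [Finite Q] (x : Q) : order x ∣ Nat.card Q := by
  refine orderOf_dvd_card_of_forall_pow_fixed _ fun n a h => ?_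
  rw [← rightTranslation_pow, rightTranslation_apply] at h
  exact rightTranslation_pow_eq_one_iff.2 (mul_left_cancel (h.trans (mul_one a).symm))

theorem pow_card_eq_one [Finite Q] (x : Q) : x ^ Nat.card Q = 1 :=
  order_dvd_iff_pow_eq_one.1 (order_dvd_card x)

theorem exists_pow_eq_of_order_eq_card [Finite Q] {x : Q} (hx : order x = Nat.card Q) (y : Q) :
    ∃ n : ℕ, x ^ n = y := by
  have hinj : Function.Injective fun i : Fin (order x) => x ^ (i : ℕ) := by
    intro i j hij
    have h := congrArg rightTranslation hij
    simp only [rightTranslation_pow] at h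
    exact Fin.ext (pow_injOn_Iio_orderOf i.2 j.2 h)
  obtain ⟨i, hi⟩ := (hinj.bijective_of_nat_card_le (by rw [Nat.card_fin, hx])).2 y
  exact ⟨i, hi⟩

theorem mul_assoc_of_order_eq_card [Finite Q] {x : Q} (hx : order x = Nat.card Q) (a b c : Q) :
    a * b * c = a * (b * c) := by
  obtain ⟨i, rfl⟩ := exists_pow_eq_of_order_eq_card hx a
  obtain ⟨j, rfl⟩ := exists_pow_eq_of_order_eq_card hx b
  obtain ⟨k, rfl⟩ := exists_pow_eq_of_order_eq_card hx c
  simp only [← pow_add, add_assoc]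

/-- A normal subloop: a subloop bundled with its normality, so that the quotient loop is a type
depending on it alone. -/
structure NormalSubloop (Q : Type*) [RightBolLoop Q] extends Subloop Q where
  normal : IsNormalSubloop carrier

namespace NormalSubloop

variable (N : NormalSubloop Q)

instance : SetLike (NormalSubloop Q) Q where
  coe N := N.carrier
  coe_injective := by
    rintro ⟨⟨_, _, _, _, _⟩, _⟩ ⟨⟨_, _, _, _, _⟩, _⟩ rfl
    rfl

/-- The left coset `aN`. -/
def leftCoset (a : Q) : Set Q := (a * ·) '' N

theorem leftCoset_of_mem {s : Q} (hs : s ∈ N) : N.leftCoset s = N := by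
  refine Set.Subset.antisymm (Set.image_subset_iff.2 fun t ht => N.mul_mem s hs t ht) fun t ht => ?_
  obtain ⟨u, hu⟩ := (mulLeft_bij s).2 t
  exact ⟨u, N.ldiv_mem s hs t ht u hu, hu⟩

theorem leftCoset_mul_eq_image_mul_left (a b : Q) :
    N.leftCoset (a * b) = (a * ·) '' N.leftCoset b := by
  rw [leftCoset, leftCoset, Set.image_image]
  exact (N.normal.2.2 a b).symm

theorem leftCoset_mul_eq_image_mul_right (a b : Q) :
    N.leftCoset (a * b) = (· * b) '' N.leftCoset a := by
  have hb : N.leftCoset b = (· * b) '' N := N.normal.1 b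
  rw [leftCoset_mul_eq_image_mul_left, hb, leftCoset, Set.image_image, Set.image_image]
  exact (N.normal.2.1 a b).symm

/-- The congruence on `Q` whose classes are the left cosets of `N`; its quotient is `Q/N`. -/
def con : Con Q where
  toSetoid := Setoid.ker N.leftCoset
  mul' {a b c d} (hab : N.leftCoset a = N.leftCoset b) (hcd : N.leftCoset c = N.leftCoset d) := by
    change N.leftCoset (a * c) = N.leftCoset (b * d)
    rw [leftCoset_mul_eq_image_mul_right, hab, ← leftCoset_mul_eq_image_mul_right,
      leftCoset_mul_eq_image_mul_left, hcd, ← leftCoset_mul_eq_image_mul_left]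

variable {N}

theorem coe_eq_coe_iff_leftCoset_eq {a b : Q} :
    (a : N.con.Quotient) = b ↔ N.leftCoset a = N.leftCoset b :=
  Con.eq _

theorem coe_eq_coe_iff_mem {a b : Q} : (a : N.con.Quotient) = b ↔ a ∈ N.leftCoset b := by
  rw [coe_eq_coe_iff_leftCoset_eq]
  constructor
  · exact fun h => h ▸ ⟨1, N.one_mem, mul_one a⟩
  · rintro ⟨s, hs, rfl⟩
    rw [leftCoset_mul_eq_image_mul_left, leftCoset_of_mem N hs, leftCoset]

variable (N)

theorem quotient_mulLeft_injective (y : N.con.Quotient) : Function.Injective (y * ·) := by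
  intro u v
  induction y, u using Con.induction_on₂ with | _ a b
  induction v using Con.induction_on with | _ c
  simp only [← Con.coe_mul, coe_eq_coe_iff_leftCoset_eq, leftCoset_mul_eq_image_mul_left]
  exact fun h => (mulLeft_bij a).1.image_injective h

theorem quotient_mulRight_injective (y : N.con.Quotient) : Function.Injective (· * y) := by
  intro u v
  induction y, u using Con.induction_on₂ with | _ a b
  induction v using Con.induction_on with | _ c
  simp only [← Con.coe_mul, coe_eq_coe_iff_leftCoset_eq, leftCoset_mul_eq_image_mul_right]
  exact fun h => (mulRight_bij a).1.image_injective h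

variable {N} in
theorem coe_inv_congr {a b : Q} (h : (a : N.con.Quotient) = b) :
    ((a⁻¹ : Q) : N.con.Quotient) = (b⁻¹ : Q) := by
  apply N.quotient_mulLeft_injective a
  calc (a : N.con.Quotient) * (a⁻¹ : Q) = (1 : Q) := by rw [← Con.coe_mul, mul_inv]
    _ = a * (b⁻¹ : Q) := by rw [h, ← Con.coe_mul, mul_inv]

instance : RightBolLoop N.con.Quotient where
  inv := Quotient.map Inv.inv fun _ _ h => (Con.eq _).1 (coe_inv_congr ((Con.eq _).2 h))
  one_mul := by rintro ⟨a⟩; exact congrArg _ (one_mul a)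
  mul_one := by rintro ⟨a⟩; exact congrArg _ (mul_one a)
  mulLeft_bij y := by
    refine ⟨N.quotient_mulLeft_injective y, ?_⟩
    rintro ⟨b⟩
    induction y using Con.induction_on with | _ a
    obtain ⟨x, rfl⟩ := (mulLeft_bij a).2 b
    exact ⟨x, rfl⟩
  mulRight_bij y := by
    refine ⟨N.quotient_mulRight_injective y, ?_⟩
    rintro ⟨b⟩
    induction y using Con.induction_on with | _ a
    obtain ⟨x, rfl⟩ := (mulRight_bij a).2 b
    exact ⟨x, rfl⟩
  mul_inv := by rintro ⟨a⟩; exact congrArg _ (mul_inv a)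
  inv_mul := by rintro ⟨a⟩; exact congrArg _ (inv_mul a)
  rbol := by rintro ⟨w⟩ ⟨u⟩ ⟨v⟩; exact congrArg _ (rbol w u v)

variable {N}

theorem coe_eq_one_iff {a : Q} : (a : N.con.Quotient) = 1 ↔ a ∈ N := by
  rw [← Con.coe_one, coe_eq_coe_iff_mem, N.leftCoset_of_mem N.one_mem, SetLike.mem_coe]

theorem coe_pow (a : Q) (n : ℕ) : ((a ^ n : Q) : N.con.Quotient) = (a : N.con.Quotient) ^ n := by
  induction n with
  | zero => rfl
  | succ n ih => rw [pow_succ, pow_succ, Con.coe_mul, ih]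

theorem coe_mul_mul_of_mem {c : Q} (hc : c ∈ N) (x : Q) :
    ((c * x * c : Q) : N.con.Quotient) = x := by
  rw [Con.coe_mul, Con.coe_mul, coe_eq_one_iff.2 hc, one_mul, mul_one]

theorem mem_of_pow_mem_of_coprime {x : Q} {m n : ℕ} (hmn : m.Coprime n) (hm : x ^ m ∈ N)
    (hn : x ^ n ∈ N) : x ∈ N := by
  rw [← coe_eq_one_iff, coe_pow] at hm hn
  exact coe_eq_one_iff.1 (eq_one_of_pow_eq_one_of_coprime hmn hm hn)

variable (N)

theorem card_quotient_mul_card : Nat.card N.con.Quotient * Nat.card N = Nat.card Q := by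
  choose rep hrep using fun y : N.con.Quotient => Quotient.exists_rep y
  let f : N.con.Quotient × N → Q := fun y => rep y.1 * y.2
  have coe_f (y : N.con.Quotient) (s : N) : (f (y, s) : N.con.Quotient) = y :=
    (coe_eq_coe_iff_mem.2 (Set.mem_image_of_mem _ s.2)).trans (hrep y)
  have f_inj : Function.Injective f := by
    rintro ⟨y, s⟩ ⟨z, t⟩ h
    obtain rfl : y = z := (coe_f y s).symm.trans (h ▸ coe_f z t)
    exact Prod.ext rfl (Subtype.ext (mul_left_cancel h))
  have f_surj : Function.Surjective f := by
    intro a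
    obtain ⟨s, hs, hsa⟩ := coe_eq_coe_iff_mem.1 (hrep (a : N.con.Quotient)).symm
    exact ⟨(a, ⟨s, hs⟩), hsa⟩
  rw [← Nat.card_prod, Nat.card_congr (Equiv.ofBijective f ⟨f_inj, f_surj⟩)]

instance [Finite Q] : Finite N.con.Quotient := Quotient.finite _

instance : Nonempty N := ⟨⟨1, N.one_mem⟩⟩

theorem pow_mem_of_card_eq [Finite Q] {m : ℕ} (hm : Nat.card Q = m * Nat.card N) (x : Q) :
    x ^ m ∈ N := by
  have hquot : Nat.card N.con.Quotient = m :=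
    Nat.eq_of_mul_eq_mul_right Nat.card_pos (N.card_quotient_mul_card.trans hm)
  rw [← coe_eq_one_iff, coe_pow, ← hquot]
  exact pow_card_eq_one _

theorem ncard_leftCoset (a : Q) : (N.leftCoset a).ncard = Nat.card N :=
  Set.ncard_image_of_injective _ (mulLeft_bij a).1

variable {N}

theorem exists_mem_leftCoset_pow_eq {x c : Q} {i m : ℕ} (hi : i.Coprime m) (hx : x ^ m = 1)
    (hc : c ∈ N) (hu : (c * x ^ i * c) ^ m = 1) :
    ∃ y ∈ N.leftCoset x, y ^ m = 1 ∧ y ^ i = c * x ^ i * c := by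
  obtain ⟨e, he⟩ := exists_mul_modEq_one_of_coprime hi
  refine ⟨(c * x ^ i * c) ^ e, ?_, ?_, ?_⟩
  · rw [← coe_eq_coe_iff_mem, coe_pow, coe_mul_mul_of_mem hc, ← coe_pow, ← pow_mul,
      pow_eq_pow_of_modEq he hx, pow_one]
  · rw [← pow_mul, mul_comm, pow_mul, hu, one_pow]
  · rw [← pow_mul, mul_comm, pow_eq_pow_of_modEq he hu, pow_one]

theorem sq_eq_one_of_forall_notMem_pow_eq_one [Finite N] {m : ℕ}
    (hm : ∀ i ∈ Set.Icc 1 (Nat.card N + 1), i.Coprime m) (h : ∀ x ∉ N, x ^ m = 1)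
    {x c : Q} (hx : x ∉ N) (hc : c ∈ N) : c ^ 2 = 1 := by
  have hroot (i : ℕ) (hi : i ∈ Set.Icc 1 (Nat.card N + 1)) :
      ∃ y ∈ N.leftCoset x, y ^ m = 1 ∧ y ^ i = c * x ^ i * c := by
    have hu : c * x ^ i * c ∉ N := by
      rw [← coe_eq_one_iff, coe_mul_mul_of_mem hc, coe_eq_one_iff]
      exact fun hxi => hx (mem_of_pow_mem_of_coprime (hm i hi) hxi (h x hx ▸ N.one_mem))
    exact exists_mem_leftCoset_pow_eq (hm i hi) (h x hx) hc (h _ hu)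
  choose! y hyx hym hyi using hroot
  have hcard : (N.leftCoset x).ncard < (Set.Icc 1 (Nat.card N + 1)).ncard := by
    rw [ncard_leftCoset]
    simp
  obtain ⟨i, hi, j, hj, hne, hij⟩ :=
    Set.exists_ne_map_eq_of_ncard_lt_of_maps_to hcard hyx ((Set.toFinite (N : Set Q)).image _)
  wlog hlt : i < j generalizing i j
  · exact this j hj i hi hne.symm hij.symm (hne.lt_or_gt.resolve_left hlt)
  obtain ⟨d, rfl⟩ := Nat.exists_eq_add_of_lt hlt
  have hR (k : ℕ) (hk : k ∈ Set.Icc 1 (Nat.card N + 1)) : rightTranslation c *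
      rightTranslation x ^ k * rightTranslation c = rightTranslation (y k) ^ k := by
    rw [← rightTranslation_pow, ← rightTranslation_mul_mul, ← hyi k hk, rightTranslation_pow]
  refine rightTranslation_pow_eq_one_iff.1 (sq_eq_one_of_mul_pow_mul_eq_pow (d := d + 1) (hm _ ?_)
    (rightTranslation_pow_eq_one_iff.2 (h x hx)) (rightTranslation_pow_eq_one_iff.2 (hym i hi))
    (hR i hi) (hij ▸ hR _ hj))
  rw [Set.mem_Icc] at hj ⊢
  omega

variable (N) in
theorem exists_notMem_pow_ne_one [Finite Q] (hodd : Odd (Nat.card Q)) (hN : 1 < Nat.card N)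
    (hNQ : Nat.card N < Nat.card Q) {m : ℕ}
    (hm : ∀ i ∈ Set.Icc 1 (Nat.card N + 1), i.Coprime m) : ∃ x ∉ N, x ^ m ≠ 1 := by
  by_contra! h
  obtain ⟨x, -, hx⟩ : ∃ x ∈ Set.univ, x ∉ (N : Set Q) :=
    Set.exists_mem_notMem_of_ncard_lt_ncard (by rwa [Set.ncard_univ])
  obtain ⟨c, hc, hc1⟩ := Set.exists_ne_of_one_lt_ncard (s := (N : Set Q)) hN 1
  have hsq : c ^ 2 = 1 := sq_eq_one_of_forall_notMem_pow_eq_one hm h hx hc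
  exact hc1 (eq_one_of_pow_eq_one_of_coprime hodd.coprime_two_left hsq (pow_card_eq_one c))

end NormalSubloop

end RightBolLoop

/-- Let `p > q` be odd primes and `Q` a right Bol loop of order `pq`
containing a normal subloop of order `q`. Then `Q` is associative. -/
theorem stmt4 {p q : ℕ} (hp : p.Prime) (hq : q.Prime) (hpo : Odd p) (hqo : Odd q)
    (hlt : q < p) (Q : Type*) [RightBolLoop Q] [Fintype Q]
    (hcard : Fintype.card Q = p * q)
    (S : Subloop Q) (hnorm : IsNormalSubloop S.carrier)
    (hS : S.carrier.ncard = q) :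
    ∀ a b c : Q, (a * b) * c = a * (b * c) := by
  let N : RightBolLoop.NormalSubloop Q := ⟨S, hnorm⟩
  have hN : Nat.card N = q := hS
  have hQ : Nat.card Q = p * q := Nat.card_eq_fintype_card.trans hcard
  have hsucc : q + 1 < p := by
    obtain ⟨m, rfl⟩ := hpo
    obtain ⟨n, rfl⟩ := hqo
    omega
  have hcop (i : ℕ) (hi : i ∈ Set.Icc 1 (Nat.card N + 1)) : i.Coprime p := by
    rw [hN] at hi
    exact (Nat.coprime_of_lt_prime (Nat.one_le_iff_ne_zero.1 hi.1) (hi.2.trans_lt hsucc) hp).symm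
  obtain ⟨x, hxN, hxp⟩ : ∃ x ∉ N, x ^ p ≠ 1 :=
    N.exists_notMem_pow_ne_one (hQ ▸ hpo.mul hqo) (hN ▸ hq.one_lt)
      (by rw [hN, hQ]; exact lt_mul_of_one_lt_left hq.pos hp.one_lt) hcop
  have hxq : x ^ q ≠ 1 := fun h =>
    hxN <| RightBolLoop.NormalSubloop.mem_of_pow_mem_of_coprime
      ((Nat.coprime_primes hp hq).2 hlt.ne') (N.pow_mem_of_card_eq (hN ▸ hQ) x) (h ▸ N.one_mem)
  have hx : RightBolLoop.order x = Nat.card Q := by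
    rw [ne_eq, ← RightBolLoop.order_dvd_iff_pow_eq_one] at hxp hxq
    rw [hQ]
    exact eq_mul_of_dvd_mul_of_not_dvd hp hq (hQ ▸ RightBolLoop.order_dvd_card x) hxp hxq
  exact RightBolLoop.mul_assoc_of_order_eq_card hx
end

section
/- Let p > q be odd primes. If q does not divide p^2 - 1, then GL(2, F_p) has no subgroup isomorphic to the dihedral group D_{2q} of order 2q. If q divides p^2 - 1, then any two subgroups of GL(2, F_p) isomorphic to D_{2q} are conjugate in GL(2, F_p). -/
/-!
Let `F` be a field, `n > 2` invertible in `F`, and let `D_{2n}` act faithfully on `F ^ 2` with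
rotation `S` and reflection `T`. As `S` is conjugate to `S⁻¹` and `S ^ 2 ≠ 1`, its determinant is
`1`, so its eigenvalues in the algebraic closure are `l` and `l⁻¹`; as `n` is invertible, `S` is
semisimple and `l` is a primitive `n`-th root of unity. If `F` has `Q` elements, Frobenius permutes
`{l, l⁻¹}`, so `n` divides `Q - 1` or `Q + 1`. For a second action with rotation `S'`, some power
of `S'` has the eigenvalues, hence the trace, of `S`. Finally the trace of the rotation determines
the pair up to conjugacy: in the basis `v, S v` with `T v = v`, the matrices of `S` and `T` involve
only `tr S`.
-/

open Matrix

section TwoByTwo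

variable {R : Type*} [CommRing R]

theorem adjugate_fin_two_eq_trace_smul_one_sub (A : Matrix (Fin 2) (Fin 2) R) :
    A.adjugate = A.trace • 1 - A := by
  ext i j
  fin_cases i <;> fin_cases j <;> simp [adjugate_fin_two, trace_fin_two]

theorem sq_fin_two_eq_trace_smul_sub_det_smul_one (A : Matrix (Fin 2) (Fin 2) R) :
    A ^ 2 = A.trace • A - A.det • 1 := by
  rw [← mul_adjugate, adjugate_fin_two_eq_trace_smul_one_sub, mul_sub, mul_smul_comm, mul_one,
    sub_sub_cancel, sq]

theorem trace_sq_fin_two (A : Matrix (Fin 2) (Fin 2) R) :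
    (A ^ 2).trace = A.trace ^ 2 - 2 * A.det := by
  rw [sq_fin_two_eq_trace_smul_sub_det_smul_one, trace_sub, trace_smul, trace_smul, trace_one,
    Fintype.card_fin, smul_eq_mul, smul_eq_mul, Nat.cast_ofNat]
  ring

theorem trace_pow_fin_two {A : Matrix (Fin 2) (Fin 2) R} {l m : R} (htr : A.trace = l + m)
    (hdet : A.det = l * m) (k : ℕ) : (A ^ k).trace = l ^ k + m ^ k := by
  induction k using Nat.twoStepInduction with
  | zero => simp [one_add_one_eq_two]
  | one => simpa using htr
  | more k ih ih' =>
    have recurrence : A ^ (k + 2) = A.trace • A ^ (k + 1) - A.det • A ^ k := by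
      rw [pow_add, sq_fin_two_eq_trace_smul_sub_det_smul_one, mul_sub, mul_smul_comm,
        mul_smul_comm, mul_one, ← pow_succ]
    rw [recurrence, trace_sub, trace_smul, trace_smul, ih, ih', htr, hdet, smul_eq_mul, smul_eq_mul]
    ring

theorem mul_of_pair_transpose {m n : Type*} [Fintype n] (M : Matrix m n R) (v w : n → R) :
    M * (of ![v, w])ᵀ = (of ![M *ᵥ v, M *ᵥ w])ᵀ := by
  ext i j
  fin_cases j <;> rfl

theorem of_pair_transpose_mul {m : Type*} (v w : m → R) (a b c d : R) :
    (of ![v, w])ᵀ * !![a, b; c, d] = (of ![a • v + c • w, b • v + d • w])ᵀ := by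
  ext i j
  fin_cases j <;> simp [mul_apply, mul_comm]

end TwoByTwo

section FiniteOrder

variable {F : Type*} [Field F]

open Polynomial in
theorem eq_one_of_pow_eq_one_of_isNilpotent_sub_one {A : Type*} [Ring A] [Algebra F A] {a : A}
    {n : ℕ} (hn : (n : F) ≠ 0) (hpow : a ^ n = 1) (ha : IsNilpotent (a - 1)) : a = 1 := by
  obtain ⟨k, hk⟩ := ha
  have hsq : Squarefree (minpoly F a) :=
    (X_pow_sub_one_separable_iff.2 hn).squarefree.squarefree_of_dvd
      (minpoly.dvd F a (by simp [hpow]))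
  have hdvd : minpoly F a ∣ (X - 1) ^ (k + 1) :=
    minpoly.dvd F a (by simp [pow_succ, hk])
  have hroot := (minpoly.dvd_iff).1 ((hsq.dvd_pow_iff_dvd k.succ_ne_zero).1 hdvd)
  simpa [sub_eq_zero] using hroot

variable {A B : Matrix (Fin 2) (Fin 2) F}

theorem eq_one_of_det_eq_one_of_trace_eq_two {n : ℕ} (hn : (n : F) ≠ 0) (hdet : A.det = 1)
    (htr : A.trace = 2) (hpow : A ^ n = 1) : A = 1 := by
  refine eq_one_of_pow_eq_one_of_isNilpotent_sub_one hn hpow ⟨2, ?_⟩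
  have hquad : A ^ 2 = 2 * A - 1 := by
    rw [sq_fin_two_eq_trace_smul_sub_det_smul_one, htr, hdet, one_smul, two_smul, two_mul]
  rw [(Commute.one_right A).sub_sq, hquad, mul_one, one_pow, sub_sub_cancel_left, neg_add_cancel]

theorem trace_sq_ne_four (hord : (orderOf A : F) ≠ 0) (hdet : A.det = 1) (hsq : A ^ 2 ≠ 1) :
    A.trace ^ 2 ≠ 4 := by
  refine fun htr ↦ hsq (eq_one_of_det_eq_one_of_trace_eq_two hord (by simp [hdet]) ?_
    (by rw [pow_right_comm, pow_orderOf_eq_one, one_pow]))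
  rw [trace_sq_fin_two, htr, hdet]
  norm_num

theorem exists_forall_trace_pow_eq_add_inv (K : Type*) [Field K] [IsAlgClosed K] [Algebra F K]
    (hdet : A.det = 1) :
    ∃ l : K, l ≠ 0 ∧ ∀ k, algebraMap F K (A ^ k).trace = l ^ k + (l ^ k)⁻¹ := by
  obtain ⟨l, hl⟩ := IsAlgClosed.exists_aeval_eq_zero K A.charpoly
    (by rw [charpoly_degree_eq_dim]; simp)
  have hinv : l * (algebraMap F K A.trace - l) = 1 := by
    simp only [charpoly_fin_two, hdet, map_one, map_add, map_sub, map_pow, map_mul,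
      Polynomial.aeval_X, Polynomial.aeval_C] at hl
    linear_combination -hl
  have hl0 : l ≠ 0 := left_ne_zero_of_mul_eq_one hinv
  have htrace (M : Matrix (Fin 2) (Fin 2) F) :
      algebraMap F K M.trace = ((algebraMap F K).mapMatrix M).trace :=
    AddMonoidHom.map_trace _ M
  refine ⟨l, hl0, fun k ↦ ?_⟩
  rw [htrace, map_pow, trace_pow_fin_two (l := l) (m := l⁻¹), inv_pow]
  · rw [← htrace, ← eq_inv_of_mul_eq_one_right hinv, add_sub_cancel]
  · rw [← RingHom.map_det, hdet, map_one, mul_inv_cancel₀ hl0]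

theorem exists_isPrimitiveRoot_trace_pow_eq_add_inv (K : Type*) [Field K] [IsAlgClosed K]
    [Algebra F K] (hord : (orderOf A : F) ≠ 0) (hdet : A.det = 1) :
    ∃ l : K, IsPrimitiveRoot l (orderOf A) ∧
      ∀ k, algebraMap F K (A ^ k).trace = l ^ k + (l ^ k)⁻¹ := by
  obtain ⟨l, hl0, htr⟩ := exists_forall_trace_pow_eq_add_inv K hdet
  refine ⟨l, ⟨?_, fun k hk ↦ orderOf_dvd_of_pow_eq_one ?_⟩, htr⟩
  · have htwo : (2 : K) = l ^ orderOf A + (l ^ orderOf A)⁻¹ := by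
      simpa [pow_orderOf_eq_one, map_ofNat] using htr (orderOf A)
    field_simp at htwo
    exact sub_eq_zero.1 (sq_eq_zero_iff.1 (by linear_combination -htwo))
  · refine eq_one_of_det_eq_one_of_trace_eq_two hord (by simp [hdet])
      ((algebraMap F K).injective ?_) (by rw [pow_right_comm, pow_orderOf_eq_one, one_pow])
    rw [htr, hk, inv_one, one_add_one_eq_two, map_ofNat]

theorem exists_trace_pow_eq (hord : (orderOf A : F) ≠ 0) (hAB : orderOf A = orderOf B)
    (hA : A.det = 1) (hB : B.det = 1) : ∃ k : ℕ, (A ^ k).trace = B.trace := by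
  have : NeZero (orderOf A) := ⟨fun h ↦ hord (by rw [h, Nat.cast_zero])⟩
  obtain ⟨l, hl, hlA⟩ :=
    exists_isPrimitiveRoot_trace_pow_eq_add_inv (AlgebraicClosure F) hord hA
  obtain ⟨m, hm, hmB⟩ :=
    exists_isPrimitiveRoot_trace_pow_eq_add_inv (AlgebraicClosure F) (hAB ▸ hord) hB
  obtain ⟨k, -, rfl⟩ := hl.eq_pow_of_pow_eq_one (hAB ▸ hm.pow_eq_one)
  refine ⟨k, (algebraMap F (AlgebraicClosure F)).injective ?_⟩
  simpa [hlA k] using (hmB 1).symm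

theorem orderOf_dvd_card_sub_one_or_dvd_card_add_one [Finite F] (hord : (orderOf A : F) ≠ 0)
    (hdet : A.det = 1) : orderOf A ∣ Nat.card F - 1 ∨ orderOf A ∣ Nat.card F + 1 := by
  have := Fintype.ofFinite F
  obtain ⟨l, hl, htr⟩ :=
    exists_isPrimitiveRoot_trace_pow_eq_add_inv (AlgebraicClosure F) hord hdet
  have hl0 : l ≠ 0 := hl.ne_zero fun h ↦ hord (by rw [h, Nat.cast_zero])
  have hfrob : l ^ Nat.card F + (l ^ Nat.card F)⁻¹ = l + l⁻¹ := by
    have hfix := (FiniteField.frobeniusAlgHom F (AlgebraicClosure F)).commutes (A ^ 1).trace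
    rw [htr 1, map_add, map_inv₀, pow_one, FiniteField.frobeniusAlgHom_apply] at hfix
    rwa [Nat.card_eq_fintype_card]
  have hprod : (l ^ Nat.card F - l) * (l ^ Nat.card F * l - 1) = 0 := by
    field_simp at hfrob
    linear_combination hfrob
  refine (mul_eq_zero.1 hprod).imp (fun h ↦ hl.dvd_of_pow_eq_one _ ?_)
    fun h ↦ hl.dvd_of_pow_eq_one _ ?_
  · rw [pow_sub₀ _ hl0 Nat.card_pos, sub_eq_zero.1 h, pow_one, mul_inv_cancel₀ hl0]
  · rw [pow_succ, sub_eq_zero.1 h]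

theorem det_eq_one_of_isConj_inv {g : GL (Fin 2) F} (hg : IsConj g g⁻¹) (hsq : g ^ 2 ≠ 1) :
    g.val.det = 1 := by
  have htr : g⁻¹.val.trace = g.val.trace := by
    obtain ⟨c, hc⟩ := isConj_iff.1 hg
    rw [← hc, Units.val_mul, Units.val_mul, trace_units_conj]
  have hdet : g.val.det * g.val.det = 1 := by
    have hconj := GeneralLinearGroup.det.map_isConj hg
    rw [isConj_iff_eq, map_inv, eq_inv_iff_mul_eq_one] at hconj
    exact congrArg Units.val hconj
  have hadj : g.val.adjugate = g.val.det • g⁻¹.val := by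
    rw [← one_mul g.val.adjugate, ← g.inv_mul, mul_assoc, mul_adjugate, mul_smul_comm, mul_one]
  have htr_det : g.val.det * g.val.trace = g.val.trace := by
    rw [← smul_eq_mul, ← htr, ← trace_smul, ← hadj, htr, adjugate_fin_two, trace_fin_two_of,
      trace_fin_two, add_comm]
  by_contra hne
  have htr0 : g.val.trace = 0 := by
    by_contra h0
    exact hne ((mul_eq_right₀ h0).1 htr_det)
  refine hsq (Units.ext ?_)
  rw [Units.val_pow_eq_pow_val, sq_fin_two_eq_trace_smul_sub_det_smul_one, htr0,
    (mul_self_eq_one_iff.1 hdet).resolve_left hne]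
  simp

end FiniteOrder

section CyclicBasis

variable {R : Type*} [CommRing R]

theorem exists_ne_zero_mulVec_eq_self {ι : Type*} [Fintype ι] [DecidableEq ι]
    {T : Matrix ι ι R} (hT : T * T = 1) (hne : T ≠ -1) : ∃ v, v ≠ 0 ∧ T *ᵥ v = v := by
  obtain ⟨w, hw⟩ : ∃ w, (T + 1) *ᵥ w ≠ 0 := by
    by_contra! h
    exact hne (eq_neg_of_add_eq_zero_left
      (ext_of_mulVec_single fun i ↦ by rw [h, zero_mulVec]))
  exact ⟨_, hw, by rw [mulVec_mulVec, mul_add, hT, mul_one, add_comm]⟩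

/-- The matrix with columns `v` and `S v`: the change of basis to the cyclic basis of `S`
generated by `v`, in which `S` becomes a companion matrix. -/
def cyclicBasisMatrix (S : Matrix (Fin 2) (Fin 2) R) (v : Fin 2 → R) :
    Matrix (Fin 2) (Fin 2) R :=
  (of ![v, S *ᵥ v])ᵀ

variable {S T : Matrix (Fin 2) (Fin 2) R} {v : Fin 2 → R}

theorem self_mul_cyclicBasisMatrix :
    S * cyclicBasisMatrix S v = cyclicBasisMatrix S v * !![0, -S.det; 1, S.trace] := by
  rw [cyclicBasisMatrix, mul_of_pair_transpose, of_pair_transpose_mul, mulVec_mulVec, ← sq,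
    sq_fin_two_eq_trace_smul_sub_det_smul_one, sub_mulVec, smul_mulVec, smul_mulVec, one_mulVec,
    zero_smul, zero_add, one_smul, neg_smul, neg_add_eq_sub]

theorem reflection_mul_cyclicBasisMatrix (hS : S.det = 1) (hST : S * T * S = T)
    (hTv : T *ᵥ v = v) :
    T * cyclicBasisMatrix S v = cyclicBasisMatrix S v * !![1, S.trace; 0, -1] := by
  have hTS : T * S = (S.trace • 1 - S) * T := by
    rw [← adjugate_fin_two_eq_trace_smul_one_sub]
    calc T * S = S.adjugate * S * (T * S) := by rw [adjugate_mul, hS, one_smul, one_mul]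
      _ = S.adjugate * T := by rw [mul_assoc, ← mul_assoc S, hST]
  rw [cyclicBasisMatrix, mul_of_pair_transpose, of_pair_transpose_mul, mulVec_mulVec, hTS,
    ← mulVec_mulVec, hTv, sub_mulVec, smul_mulVec, one_mulVec]
  simp [sub_eq_add_neg]

end CyclicBasis

section DihedralPair

variable {F : Type*} [Field F] {S T : Matrix (Fin 2) (Fin 2) F}

theorem isUnit_cyclicBasisMatrix {v : Fin 2 → F} (hS : S.det = 1) (htr : S.trace ^ 2 ≠ 4)
    (hST : S * T * S = T) (hv : v ≠ 0) (hTv : T *ᵥ v = v) : IsUnit (cyclicBasisMatrix S v) := by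
  rw [cyclicBasisMatrix, isUnit_transpose, ← linearIndependent_rows_iff_isUnit]
  refine (LinearIndependent.pair_iff' hv).2 fun a ha ↦ htr ?_
  have hsq : a ^ 2 = 1 := smul_left_injective F hv <| by
    calc a ^ 2 • v = a • S *ᵥ T *ᵥ v := by rw [hTv, ← ha, smul_smul, sq]
      _ = S *ᵥ T *ᵥ S *ᵥ v := by rw [← ha, mulVec_smul, mulVec_smul]
      _ = (1 : F) • v := by rw [mulVec_mulVec, mulVec_mulVec, hST, hTv, one_smul]
  have hquad : a ^ 2 = S.trace * a - 1 := smul_left_injective F hv <| by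
    calc a ^ 2 • v = S ^ 2 *ᵥ v := by
          rw [sq, sq, ← mulVec_mulVec, ← ha, mulVec_smul, ← ha, smul_smul]
      _ = (S.trace * a - 1) • v := by
        rw [sq_fin_two_eq_trace_smul_sub_det_smul_one, hS, one_smul, sub_mulVec, smul_mulVec, ← ha,
          one_mulVec, smul_smul, sub_smul, one_smul]
  linear_combination -S.trace ^ 2 * hsq + (S.trace * a + 2) * (hsq - hquad)

theorem exists_semiconjBy_normal_form (hS : S.det = 1) (htr : S.trace ^ 2 ≠ 4) (hT : T * T = 1)
    (hST : S * T * S = T) : ∃ P : GL (Fin 2) F,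
      SemiconjBy P.val !![0, -1; 1, S.trace] S ∧ SemiconjBy P.val !![1, S.trace; 0, -1] T := by
  have hne : T ≠ -1 := by
    rintro rfl
    have hsq : S ^ 2 = 1 := by simpa [sq] using hST
    have htr_sq := trace_sq_fin_two S
    rw [hsq, hS, trace_one, Fintype.card_fin] at htr_sq
    exact htr (by push_cast at htr_sq; linear_combination -htr_sq)
  obtain ⟨v, hv, hTv⟩ := exists_ne_zero_mulVec_eq_self hT hne
  obtain ⟨P, hP⟩ := isUnit_cyclicBasisMatrix hS htr hST hv hTv
  refine ⟨P, ?_, ?_⟩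
  · rw [SemiconjBy, hP, self_mul_cyclicBasisMatrix, hS]
  · rw [SemiconjBy, hP, reflection_mul_cyclicBasisMatrix hS hST hTv]

theorem exists_semiconjBy_of_trace_eq {S' T' : Matrix (Fin 2) (Fin 2) F} (hS : S.det = 1)
    (hT : T * T = 1) (hST : S * T * S = T) (hS' : S'.det = 1) (hT' : T' * T' = 1)
    (hST' : S' * T' * S' = T') (htr : S.trace ^ 2 ≠ 4) (heq : S'.trace = S.trace) :
    ∃ g : GL (Fin 2) F, SemiconjBy g.val S S' ∧ SemiconjBy g.val T T' := by
  obtain ⟨P, hPS, hPT⟩ := exists_semiconjBy_normal_form hS htr hT hST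
  obtain ⟨Q, hQS, hQT⟩ := exists_semiconjBy_normal_form hS' (heq ▸ htr) hT' hST'
  rw [heq] at hQS hQT
  exact ⟨Q * P⁻¹, hQS.mul_left hPS.units_inv_symm_left, hQT.mul_left hPT.units_inv_symm_left⟩

end DihedralPair

section DihedralGroup

open DihedralGroup

variable {n : ℕ}

theorem isConj_r_inv (i : ZMod n) : IsConj (r i) (r i)⁻¹ :=
  isConj_iff.2 ⟨sr 0, by simp⟩

theorem closure_r_one_sr_zero : Subgroup.closure {(r 1 : DihedralGroup n), sr 0} = ⊤ := by
  have hrot (i : ZMod n) : r i ∈ Subgroup.closure {(r 1 : DihedralGroup n), sr 0} := by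
    rw [← ZMod.intCast_zmod_cast i, ← r_one_zpow]
    exact zpow_mem (Subgroup.subset_closure (Set.mem_insert _ _)) _
  refine (Subgroup.eq_top_iff' _).2 fun x ↦ ?_
  rcases x with i | i
  · exact hrot i
  · rw [← zero_add i, ← sr_mul_r]
    exact mul_mem (Subgroup.subset_closure (Set.mem_insert_of_mem _ rfl)) (hrot i)

theorem exists_monoidHom_injective_range_eq {G D : Type*} [Group G] [Group D] {H : Subgroup G}
    (e : H ≃* D) : ∃ φ : D →* G, Function.Injective φ ∧ φ.range = H :=
  ⟨H.subtype.comp e.symm.toMonoidHom, H.subtype_injective.comp e.symm.injective, by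
    rw [MonoidHom.range_comp, MonoidHom.range_eq_top.2 e.symm.surjective, ← MonoidHom.range_eq_map,
      H.range_subtype]⟩

variable {F : Type*} [Field F] {ρ ρ' : DihedralGroup n →* GL (Fin 2) F}

theorem orderOf_map_r_one (hρ : Function.Injective ρ) : orderOf (ρ (r 1)).val = n := by
  rw [orderOf_units, orderOf_injective ρ hρ, orderOf_r_one]

theorem map_r_one_sq_ne_one (hn : 2 < n) (hρ : Function.Injective ρ) : ρ (r 1) ^ 2 ≠ 1 := by
  refine fun h ↦ hn.not_ge (Nat.le_of_dvd two_pos ?_)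
  rw [← orderOf_map_r_one hρ, orderOf_units]
  exact orderOf_dvd_of_pow_eq_one h

theorem det_map_r_one (hn : 2 < n) (hρ : Function.Injective ρ) : (ρ (r 1)).val.det = 1 :=
  det_eq_one_of_isConj_inv (map_inv ρ (r 1) ▸ ρ.map_isConj (isConj_r_inv 1))
    (map_r_one_sq_ne_one hn hρ)

theorem exists_semiconjBy_map_r_one_pow (hn : 2 < n) (hnF : (n : F) ≠ 0)
    (hρ : Function.Injective ρ) (hρ' : Function.Injective ρ') :
    ∃ (k : ℕ) (g : GL (Fin 2) F), SemiconjBy g (ρ (r 1)) (ρ' (r 1) ^ k) ∧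
      SemiconjBy g (ρ (sr 0)) (ρ' (sr 0)) := by
  have hord := orderOf_map_r_one hρ
  have hord' := orderOf_map_r_one hρ'
  have hdet := det_map_r_one hn hρ
  have hdet' := det_map_r_one hn hρ'
  obtain ⟨k, hk⟩ := exists_trace_pow_eq (by rwa [hord']) (hord'.trans hord.symm) hdet' hdet
  have htr : (ρ (r 1)).val.trace ^ 2 ≠ 4 := trace_sq_ne_four (by rwa [hord]) hdet fun h ↦
    map_r_one_sq_ne_one hn hρ (Units.ext h)
  have hrel (τ : DihedralGroup n →* GL (Fin 2) F) (m : ℕ) :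
      (τ (r 1) ^ m).val * (τ (sr 0)).val * (τ (r 1) ^ m).val = (τ (sr 0)).val := by
    rw [← Units.val_mul, ← Units.val_mul, ← map_pow, ← map_mul, ← map_mul]
    simp
  have hinv (τ : DihedralGroup n →* GL (Fin 2) F) : (τ (sr 0)).val * (τ (sr 0)).val = 1 := by
    rw [← Units.val_mul, ← map_mul, sr_mul_self, map_one, Units.val_one]
  obtain ⟨g, hr, hsr⟩ := exists_semiconjBy_of_trace_eq hdet (hinv ρ) (by simpa using hrel ρ 1)
    (S' := (ρ' (r 1) ^ k).val) (by simp [hdet']) (hinv ρ') (hrel ρ' k) htr (by simpa using hk)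
  exact ⟨k, g, SemiconjBy.units_of_val hr, SemiconjBy.units_of_val hsr⟩

theorem exists_map_conj_range_eq (hn : 2 < n) (hnF : (n : F) ≠ 0) (hρ : Function.Injective ρ)
    (hρ' : Function.Injective ρ') :
    ∃ g : GL (Fin 2) F, ρ.range.map (MulAut.conj g).toMonoidHom = ρ'.range := by
  obtain ⟨k, g, hr, hsr⟩ := exists_semiconjBy_map_r_one_pow hn hnF hρ hρ'
  have : NeZero n := ⟨by omega⟩
  have : Finite ρ'.range := Finite.of_surjective _ ρ'.rangeRestrict_surjective
  refine ⟨g, Subgroup.eq_of_le_of_card_ge ?_ (le_of_eq ?_)⟩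
  · rw [MonoidHom.map_range, MonoidHom.range_eq_map, ← closure_r_one_sr_zero,
      Subgroup.map_le_iff_le_comap, Subgroup.closure_le, Set.pair_subset_iff]
    exact ⟨⟨r 1 ^ k, (map_pow ρ' _ k).trans (eq_mul_inv_of_mul_eq hr.eq.symm)⟩,
      ⟨sr 0, eq_mul_inv_of_mul_eq hsr.eq.symm⟩⟩
  · rw [Subgroup.card_map_of_injective (MulAut.conj g).injective,
      ← Nat.card_congr (MonoidHom.ofInjective hρ).toEquiv,
      ← Nat.card_congr (MonoidHom.ofInjective hρ').toEquiv]

theorem dvd_card_sq_sub_one_of_injective [Finite F] (hn : 2 < n) (hnF : (n : F) ≠ 0)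
    (hρ : Function.Injective ρ) : n ∣ Nat.card F ^ 2 - 1 := by
  have hdvd := orderOf_dvd_card_sub_one_or_dvd_card_add_one
    (by rwa [orderOf_map_r_one hρ]) (det_map_r_one hn hρ)
  rw [orderOf_map_r_one hρ] at hdvd
  rw [← one_pow 2, Nat.sq_sub_sq]
  exact hdvd.elim (·.mul_left _) (·.mul_right _)

end DihedralGroup

theorem stmt10_general {F : Type*} [Field F] {n : ℕ} (hn : 2 < n) (hnF : (n : F) ≠ 0) :
    (Finite F → ¬ n ∣ Nat.card F ^ 2 - 1 →
      ∀ H : Subgroup (GL (Fin 2) F), ¬ Nonempty (H ≃* DihedralGroup n)) ∧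
    ∀ H K : Subgroup (GL (Fin 2) F),
      Nonempty (H ≃* DihedralGroup n) → Nonempty (K ≃* DihedralGroup n) →
      ∃ g : GL (Fin 2) F, Subgroup.map (MulAut.conj g).toMonoidHom H = K := by
  refine ⟨fun _ hdvd H ⟨e⟩ ↦ ?_, fun H K ⟨e⟩ ⟨e'⟩ ↦ ?_⟩
  · obtain ⟨ρ, hρ, -⟩ := exists_monoidHom_injective_range_eq e
    exact hdvd (dvd_card_sq_sub_one_of_injective hn hnF hρ)
  · obtain ⟨ρ, hρ, rfl⟩ := exists_monoidHom_injective_range_eq e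
    obtain ⟨ρ', hρ', rfl⟩ := exists_monoidHom_injective_range_eq e'
    exact exists_map_conj_range_eq hn hnF hρ hρ'

/-- Let `p > q` be odd primes. If `q ∤ p² - 1`, then `GL(2, 𝔽_p)` has no
subgroup isomorphic to the dihedral group `D_{2q}` of order `2q`; and if
`q ∣ p² - 1`, then any two subgroups of `GL(2, 𝔽_p)` isomorphic to `D_{2q}`
are conjugate in `GL(2, 𝔽_p)`. -/
theorem stmt10 {p q : ℕ} (hp : p.Prime) (hq : q.Prime) (hpo : Odd p)
    (hqo : Odd q) (hlt : q < p) :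
    (¬ q ∣ p ^ 2 - 1 →
      ∀ H : Subgroup (GL (Fin 2) (ZMod p)),
        ¬ Nonempty (↥H ≃* DihedralGroup q)) ∧
    (q ∣ p ^ 2 - 1 →
      ∀ H K : Subgroup (GL (Fin 2) (ZMod p)),
        Nonempty (↥H ≃* DihedralGroup q) → Nonempty (↥K ≃* DihedralGroup q) →
        ∃ g : GL (Fin 2) (ZMod p),
          Subgroup.map (MulAut.conj g).toMonoidHom H = K) := by
  have := Fact.mk hp
  have hqF : (q : ZMod p) ≠ 0 := fun h ↦
    hlt.not_ge (Nat.le_of_dvd hq.pos ((ZMod.natCast_eq_zero_iff q p).1 h))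
  obtain ⟨hnone, hconj⟩ := stmt10_general (hq.two_le.lt_of_ne' (hqo.ne_two_of_dvd_nat dvd_rfl)) hqF
  exact ⟨fun hdvd ↦ hnone inferInstance (by rwa [Nat.card_zmod]), fun _ ↦ hconj⟩
end
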